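/- arXiv:2104.01786 — 2 statements merged into one kernel-verified Lean document; each statement's English description precedes it below -/
import Mathlib

section
/- Define J̃ = Ẽ⁴τ on the split octonions 𝕆̃, where τ = Ẽ⁵Ẽ⁶Ẽ⁷. The commutant of J̃ inside the Lie algebra span{Ẽ^i Ẽ^j : i<j} ≅ so(4,3) is the direct sum of the span of {Ẽ^i Ẽ^j : 1 ≤ i < j ≤ 3} and the span of {Ẽ^i Ẽ^j : 4 ≤ i < j ≤ 7}, a 9-dimensional subalgebra isomorphic to so(3) ⊕ so(1,3). -/
open Matrix BigOperators

noncomputable section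

def sIdx : Fin 8 → Fin 8 → Fin 8 :=
  ![![0, 1, 2, 3, 4, 5, 6, 7],
    ![1, 0, 7, 6, 5, 4, 3, 2],
    ![2, 7, 0, 5, 6, 3, 4, 1],
    ![3, 6, 5, 0, 7, 2, 1, 4],
    ![4, 5, 6, 7, 0, 1, 2, 3],
    ![5, 4, 3, 2, 1, 0, 7, 6],
    ![6, 3, 4, 1, 2, 7, 0, 5],
    ![7, 2, 1, 4, 3, 6, 5, 0]]

def sSgn : Fin 8 → Fin 8 → ℝ :=
  ![![1, 1, 1, 1, 1, 1, 1, 1],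
    ![1, 1, 1, -1, 1, 1, -1, 1],
    ![1, -1, 1, 1, 1, 1, 1, -1],
    ![1, 1, -1, 1, 1, -1, 1, 1],
    ![1, -1, -1, -1, 1, -1, -1, -1],
    ![1, -1, -1, 1, 1, -1, 1, -1],
    ![1, 1, -1, -1, 1, -1, -1, 1],
    ![1, -1, 1, -1, 1, 1, -1, -1]]

/-- Left multiplication by the split octonion `y` as an 8×8 real matrix. -/
def Lt (y : Fin 8 → ℝ) : Matrix (Fin 8) (Fin 8) ℝ :=
  Matrix.of fun r c => ∑ i, if r = sIdx i c then sSgn i c * y i else 0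

/-- The imaginary split octonion unit `ẽ^(i+1)` as a vector. -/
def et (i : Fin 7) : Fin 8 → ℝ := Pi.single i.succ 1

/-- The Clifford generator `Ẽ^(i+1) = L_{ẽ^(i+1)}`. -/
def Et (i : Fin 7) : Matrix (Fin 8) (Fin 8) ℝ := Lt (et i)

/-- The spinor image of so(4,3): the span of the products `Ẽ^i Ẽ^j`, `i < j`. -/
def spanEtEt : Submodule ℝ (Matrix (Fin 8) (Fin 8) ℝ) :=
  Submodule.span ℝ {M | ∃ i j : Fin 7, i < j ∧ M = Et i * Et j}

/-- The complex structure `J̃ = Ẽ⁴ τ`. -/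
def Jt : Matrix (Fin 8) (Fin 8) ℝ := Et 3 * (Et 4 * Et 5 * Et 6)

/-- The commutant of `J̃` inside the spinor image of so(4,3). -/
def commJtSub : Submodule ℝ (Matrix (Fin 8) (Fin 8) ℝ) :=
  spanEtEt ⊓ LinearMap.ker (LinearMap.mulLeft ℝ Jt - LinearMap.mulRight ℝ Jt)

/-- The matrix of the Minkowski form of so(1,3). -/
def eta4 : Matrix (Fin 4) (Fin 4) ℝ := Matrix.diagonal ![(-1 : ℝ), 1, 1, 1]

def sSgnZ : Fin 8 → Fin 8 → ℤ :=
  ![![1, 1, 1, 1, 1, 1, 1, 1],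
    ![1, 1, 1, -1, 1, 1, -1, 1],
    ![1, -1, 1, 1, 1, 1, 1, -1],
    ![1, 1, -1, 1, 1, -1, 1, 1],
    ![1, -1, -1, -1, 1, -1, -1, -1],
    ![1, -1, -1, 1, 1, -1, 1, -1],
    ![1, 1, -1, -1, 1, -1, -1, 1],
    ![1, -1, 1, -1, 1, 1, -1, -1]]

lemma sSgn_cast (i j : Fin 8) : sSgn i j = (sSgnZ i j : ℝ) := by
  fin_cases i <;> fin_cases j <;> simp [sSgn, sSgnZ]

/-- Integer version of the Clifford generators. -/
def EZ (i : Fin 7) : Matrix (Fin 8) (Fin 8) ℤ :=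
  fun r c => if r = sIdx i.succ c then sSgnZ i.succ c else 0

/-- Cast integer matrices to real matrices. -/
def cst : Matrix (Fin 8) (Fin 8) ℤ →+* Matrix (Fin 8) (Fin 8) ℝ :=
  (Int.castRingHom ℝ).mapMatrix

lemma Et_cast (i : Fin 7) : Et i = cst (EZ i) := by
  ext r c
  simp only [Et, Lt, et, Matrix.of_apply, cst, EZ, RingHom.mapMatrix_apply, Matrix.map_apply]
  rw [Finset.sum_eq_single i.succ]
  · simp [sSgn_cast]
  · intro k _ hk
    simp [hk]
  · simp

/-- Integer version of the complex structure. -/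
def JZ : Matrix (Fin 8) (Fin 8) ℤ := EZ 3 * (EZ 4 * EZ 5 * EZ 6)

lemma Jt_cast : Jt = cst JZ := by
  simp [Jt, JZ, Et_cast]

def PhiM {R : Type} [CommRing R] (a : Fin 9 → R) : Matrix (Fin 8) (Fin 8) R :=
    !![0, -a 3, -a 4, -a 5, 0, -a 2 - a 8, a 1 + a 7, -a 0 - a 6;
    -a 3, 0, a 0 - a 6, a 1 - a 7, -a 2 - a 8, 0, a 5, -a 4;
    -a 4, -a 0 + a 6, 0, a 2 - a 8, a 1 + a 7, -a 5, 0, a 3;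
    -a 5, -a 1 + a 7, -a 2 + a 8, 0, -a 0 - a 6, a 4, -a 3, 0;
    0, a 2 + a 8, -a 1 - a 7, a 0 + a 6, 0, -a 3, -a 4, -a 5;
    a 2 + a 8, 0, -a 5, a 4, -a 3, 0, a 0 - a 6, a 1 - a 7;
    -a 1 - a 7, a 5, 0, -a 3, -a 4, -a 0 + a 6, 0, a 2 - a 8;
    a 0 + a 6, -a 4, a 3, 0, -a 5, -a 1 + a 7, -a 2 + a 8, 0]

def G3 (a : Fin 9 → ℝ) : Matrix (Fin 3) (Fin 3) ℝ :=
    !![0, 2 * a 0, 2 * a 1;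
    -2 * a 0, 0, 2 * a 2;
    -2 * a 1, -2 * a 2, 0]

def G4 (a : Fin 9 → ℝ) : Matrix (Fin 4) (Fin 4) ℝ :=
    !![0, -2 * a 3, -2 * a 4, -2 * a 5;
    -2 * a 3, 0, -2 * a 6, -2 * a 7;
    -2 * a 4, 2 * a 6, 0, -2 * a 8;
    -2 * a 5, 2 * a 7, 2 * a 8, 0]

def CoM (A : Matrix (Fin 8) (Fin 8) ℝ) : Fin 9 → ℝ :=
    ![(-A 0 7 + A 1 2) / 2,
    (A 0 6 + A 1 3) / 2,
    (-A 0 5 + A 2 3) / 2,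
    (-A 0 1) / 1,
    (-A 0 2) / 1,
    (-A 0 3) / 1,
    (-A 0 7 - A 1 2) / 2,
    (A 0 6 - A 1 3) / 2,
    (-A 0 5 - A 2 3) / 2]

def BrM {R : Type} [CommRing R] (a b : Fin 9 → R) : Fin 9 → R :=
    ![-2 * (a 1 * b 2 - a 2 * b 1),
    2 * (a 0 * b 2 - a 2 * b 0),
    -2 * (a 0 * b 1 - a 1 * b 0),
    2 * (a 4 * b 6 - a 6 * b 4) + 2 * (a 5 * b 7 - a 7 * b 5),
    -2 * (a 3 * b 6 - a 6 * b 3) + 2 * (a 5 * b 8 - a 8 * b 5),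
    -2 * (a 3 * b 7 - a 7 * b 3) - 2 * (a 4 * b 8 - a 8 * b 4),
    -2 * (a 3 * b 4 - a 4 * b 3) + 2 * (a 7 * b 8 - a 8 * b 7),
    -2 * (a 3 * b 5 - a 5 * b 3) - 2 * (a 6 * b 8 - a 8 * b 6),
    -2 * (a 4 * b 5 - a 5 * b 4) + 2 * (a 6 * b 7 - a 7 * b 6)]

lemma Et_Jt_comm (i : Fin 7) (hi : (i : ℕ) ≤ 2) : Et i * Jt = Jt * Et i := by
  have h : ∀ i : Fin 7, (i : ℕ) ≤ 2 → EZ i * JZ = JZ * EZ i := by decide +kernel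
  rw [Et_cast, Jt_cast, ← map_mul, ← map_mul, h i hi]

lemma Et_Jt_anti (i : Fin 7) (hi : 3 ≤ (i : ℕ)) : Et i * Jt = -(Jt * Et i) := by
  have h : ∀ i : Fin 7, 3 ≤ (i : ℕ) → EZ i * JZ = -(JZ * EZ i) := by decide +kernel
  rw [Et_cast, Jt_cast, ← map_mul, ← map_mul, h i hi, map_neg]

lemma Jt_sq : Jt * Jt = -1 := by
  have h : JZ * JZ = -1 := by decide +kernel
  rw [Jt_cast, ← map_mul, h, map_neg, map_one]

abbrev S3 : Submodule ℝ (Matrix (Fin 8) (Fin 8) ℝ) :=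
  Submodule.span ℝ {M | ∃ i j : Fin 7, i < j ∧ (j : ℕ) ≤ 2 ∧ M = Et i * Et j}

abbrev S4 : Submodule ℝ (Matrix (Fin 8) (Fin 8) ℝ) :=
  Submodule.span ℝ {M | ∃ i j : Fin 7, i < j ∧ 3 ≤ (i : ℕ) ∧ M = Et i * Et j}

lemma mem_comm (A : Matrix (Fin 8) (Fin 8) ℝ) :
    A ∈ commJtSub ↔ A ∈ spanEtEt ∧ Jt * A = A * Jt := by
  simp [commJtSub, sub_eq_zero]

lemma decomp (A : Matrix (Fin 8) (Fin 8) ℝ) (hA : A ∈ spanEtEt) :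
    ∃ P ∈ S3 ⊔ S4, ∃ Q, A = P + Q ∧ Q * Jt = -(Jt * Q) := by
  refine Submodule.span_induction (p := fun A _ =>
    ∃ P ∈ S3 ⊔ S4, ∃ Q, A = P + Q ∧ Q * Jt = -(Jt * Q)) ?_ ?_ ?_ ?_ hA
  · rintro _ ⟨i, j, hij, rfl⟩
    by_cases hj : (j : ℕ) ≤ 2
    · exact ⟨_, Submodule.mem_sup_left (Submodule.subset_span ⟨i, j, hij, hj, rfl⟩), 0, by simp, by simp⟩
    by_cases hi : 3 ≤ (i : ℕ)
    · exact ⟨_, Submodule.mem_sup_right (Submodule.subset_span ⟨i, j, hij, hi, rfl⟩), 0, by simp, by simp⟩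
    refine ⟨0, zero_mem _, _, (zero_add _).symm, ?_⟩
    rw [mul_assoc, Et_Jt_anti j (by omega), mul_neg, ← mul_assoc, Et_Jt_comm i (by omega), mul_assoc]
  · exact ⟨0, zero_mem _, 0, by simp, by simp⟩
  · rintro _ _ _ _ ⟨P, hP, Q, rfl, hQ⟩ ⟨P2, hP2, Q2, rfl, hQ2⟩
    refine ⟨_, add_mem hP hP2, Q + Q2, by abel, ?_⟩
    rw [add_mul, hQ, hQ2, mul_add]; abel
  · rintro r _ _ ⟨P, hP, Q, rfl, hQ⟩
    exact ⟨_, Submodule.smul_mem _ r hP, r • Q, by simp, by simp [hQ]⟩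

lemma sup_le_comm : S3 ⊔ S4 ≤ commJtSub := by
  refine sup_le (Submodule.span_le.2 ?_) (Submodule.span_le.2 ?_)
  · rintro _ ⟨i, j, hij, hj, rfl⟩
    refine (mem_comm _).2 ⟨Submodule.subset_span ⟨i, j, hij, rfl⟩, ?_⟩
    rw [mul_assoc, Et_Jt_comm j hj, ← mul_assoc, ← mul_assoc, Et_Jt_comm i (by omega)]
  · rintro _ ⟨i, j, hij, hi, rfl⟩
    refine (mem_comm _).2 ⟨Submodule.subset_span ⟨i, j, hij, rfl⟩, ?_⟩
    rw [mul_assoc, Et_Jt_anti j (by omega), mul_neg, ← mul_assoc, ← mul_assoc, Et_Jt_anti i hi,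
      neg_mul, neg_neg]

lemma comm_eq : commJtSub = S3 ⊔ S4 := by
  refine le_antisymm ?_ sup_le_comm
  intro A hA
  obtain ⟨hA1, hA2⟩ := (mem_comm A).1 hA
  obtain ⟨P, hP, Q, rfl, hQ⟩ := decomp A hA1
  have hP2 := ((mem_comm P).1 (sup_le_comm hP)).2
  have h1 : Jt * Q = Q * Jt := by
    rw [mul_add, add_mul, hP2] at hA2
    exact add_left_cancel hA2
  have h2 : Jt * Q = 0 := by
    rw [hQ] at h1
    ext r c
    have := congrFun (congrFun h1 r) c
    simp only [Matrix.neg_apply] at this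
    simp only [Matrix.zero_apply]
    linarith
  have h3 : Q = 0 := by
    have : Jt * (Jt * Q) = 0 := by rw [h2, mul_zero]
    rw [← mul_assoc, Jt_sq] at this
    simpa using this
  simpa [h3] using hP

set_option maxHeartbeats 4000000 in
lemma PhiM_add (a b : Fin 9 → ℝ) : PhiM (a + b) = PhiM a + PhiM b := by
  ext r c
  fin_cases r <;> fin_cases c <;> simp [PhiM] <;> ring

set_option maxHeartbeats 4000000 in
lemma PhiM_smul (t : ℝ) (a : Fin 9 → ℝ) : PhiM (t • a) = t • PhiM a := by
  ext r c
  fin_cases r <;> fin_cases c <;> simp [PhiM] <;> ring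

set_option maxHeartbeats 4000000 in
lemma PhiM_cast (a : Fin 9 → ℤ) : PhiM (fun i => (a i : ℝ)) = cst (PhiM a) := by
  ext r c
  fin_cases r <;> fin_cases c <;> simp [PhiM, cst]

def Phi : (Fin 9 → ℝ) →ₗ[ℝ] Matrix (Fin 8) (Fin 8) ℝ where
  toFun := PhiM
  map_add' := PhiM_add
  map_smul' := PhiM_smul

def Co : Matrix (Fin 8) (Fin 8) ℝ →ₗ[ℝ] (Fin 9 → ℝ) where
  toFun := CoM
  map_add' a b := by
    ext r
    fin_cases r <;> simp [CoM] <;> ring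
  map_smul' t a := by
    ext r
    fin_cases r <;> simp [CoM] <;> ring

def Gl : (Fin 9 → ℝ) →ₗ[ℝ] (Matrix (Fin 3) (Fin 3) ℝ × Matrix (Fin 4) (Fin 4) ℝ) where
  toFun a := (G3 a, G4 a)
  map_add' a b := by
    refine Prod.ext ?_ ?_
    · ext r c
      fin_cases r <;> fin_cases c <;> simp [G3] <;> ring
    · ext r c
      fin_cases r <;> fin_cases c <;> simp [G4] <;> ring
  map_smul' t a := by
    refine Prod.ext ?_ ?_
    · ext r c
      fin_cases r <;> fin_cases c <;> simp [G3] <;> ring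
    · ext r c
      fin_cases r <;> fin_cases c <;> simp [G4] <;> ring

lemma Co_Phi (a : Fin 9 → ℝ) : Co (Phi a) = a := by
  ext r
  fin_cases r <;> simp [Co, Phi, CoM, PhiM] <;> ring

/-- The index pairs of the nine generators. -/
def prI : Fin 9 → Fin 7 := ![0, 0, 1, 3, 3, 3, 4, 4, 5]

def prJ : Fin 9 → Fin 7 := ![1, 2, 2, 4, 5, 6, 5, 6, 6]

lemma single_cast (k : Fin 9) :
    (Pi.single k 1 : Fin 9 → ℝ) = fun i => ((Pi.single k (1 : ℤ) : Fin 9 → ℤ) i : ℝ) := by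
  ext i
  by_cases hi : i = k <;> simp [hi]

lemma Phi_single (k : Fin 9) : Phi (Pi.single k 1) = Et (prI k) * Et (prJ k) := by
  have h : ∀ k, PhiM (Pi.single k (1 : ℤ)) = EZ (prI k) * EZ (prJ k) := by decide +kernel
  rw [Et_cast, Et_cast, ← map_mul, ← h, ← PhiM_cast, ← single_cast]
  rfl

lemma range_Phi : commJtSub = LinearMap.range Phi := by
  rw [comm_eq]
  refine le_antisymm (sup_le (Submodule.span_le.2 ?_) (Submodule.span_le.2 ?_)) ?_
  · rintro _ ⟨i, j, hij, hj, rfl⟩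
    have : ∃ k, prI k = i ∧ prJ k = j := by
      revert i j; decide
    obtain ⟨k, rfl, rfl⟩ := this
    exact ⟨_, Phi_single k⟩
  · rintro _ ⟨i, j, hij, hj, rfl⟩
    have : ∃ k, prI k = i ∧ prJ k = j := by
      revert i j; decide
    obtain ⟨k, rfl, rfl⟩ := this
    exact ⟨_, Phi_single k⟩
  · rintro _ ⟨a, rfl⟩
    rw [pi_eq_sum_univ' a, map_sum]
    refine Submodule.sum_mem _ fun k _ => ?_
    rw [map_smul]
    refine Submodule.smul_mem _ _ ?_
    rw [Phi_single]
    have : (prI k < prJ k) ∧ ((prJ k : ℕ) ≤ 2 ∨ 3 ≤ (prI k : ℕ)) := by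
      revert k; decide
    obtain ⟨h1, h2 | h2⟩ := this
    · exact Submodule.mem_sup_left (Submodule.subset_span ⟨_, _, h1, h2, rfl⟩)
    · exact Submodule.mem_sup_right (Submodule.subset_span ⟨_, _, h1, h2, rfl⟩)

lemma BrM_add_left (a a2 b : Fin 9 → ℝ) : BrM (a + a2) b = BrM a b + BrM a2 b := by
  ext r
  fin_cases r <;> simp [BrM] <;> ring

lemma BrM_add_right (a b b2 : Fin 9 → ℝ) : BrM a (b + b2) = BrM a b + BrM a b2 := by
  ext r
  fin_cases r <;> simp [BrM] <;> ring

lemma BrM_smul_left (t : ℝ) (a b : Fin 9 → ℝ) : BrM (t • a) b = t • BrM a b := by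
  ext r
  fin_cases r <;> simp [BrM] <;> ring

lemma BrM_smul_right (t : ℝ) (a b : Fin 9 → ℝ) : BrM a (t • b) = t • BrM a b := by
  ext r
  fin_cases r <;> simp [BrM] <;> ring

lemma BrM_cast (a b : Fin 9 → ℤ) :
    BrM (fun i => (a i : ℝ)) (fun i => (b i : ℝ)) = fun i => ((BrM a b i : ℤ) : ℝ) := by
  ext r
  fin_cases r <;> simp [BrM]

/-- The commutator form on coordinates. -/
def brL : (Fin 9 → ℝ) →ₗ[ℝ] (Fin 9 → ℝ) →ₗ[ℝ] Matrix (Fin 8) (Fin 8) ℝ :=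
  LinearMap.mk₂ ℝ (fun a b => Phi a * Phi b - Phi b * Phi a)
    (fun a a2 b => by rw [map_add, add_mul, mul_add]; abel)
    (fun t a b => by rw [map_smul, smul_mul_assoc, mul_smul_comm, smul_sub])
    (fun a b b2 => by rw [map_add, add_mul, mul_add]; abel)
    (fun t a b => by rw [map_smul, smul_mul_assoc, mul_smul_comm, smul_sub])

/-- The bracket in coordinates, mapped to matrices. -/
def brR : (Fin 9 → ℝ) →ₗ[ℝ] (Fin 9 → ℝ) →ₗ[ℝ] Matrix (Fin 8) (Fin 8) ℝ :=
  LinearMap.mk₂ ℝ (fun a b => Phi (BrM a b))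
    (fun a a2 b => by rw [BrM_add_left, map_add])
    (fun t a b => by rw [BrM_smul_left, map_smul])
    (fun a b b2 => by rw [BrM_add_right, map_add])
    (fun t a b => by rw [BrM_smul_right, map_smul])

lemma br_single_lt (k l : Fin 9) (hkl : k < l) :
    brL (Pi.single k 1) (Pi.single l 1) = brR (Pi.single k 1) (Pi.single l 1) := by
  have h : ∀ k l : Fin 9, k < l → PhiM (Pi.single k (1 : ℤ)) * PhiM (Pi.single l (1 : ℤ))
      - PhiM (Pi.single l (1 : ℤ)) * PhiM (Pi.single k (1 : ℤ))
      = PhiM (BrM (Pi.single k (1 : ℤ)) (Pi.single l (1 : ℤ))) := by decide +kernel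
  have h3 := congrArg cst (h k l hkl)
  simp only [map_sub, map_mul, ← PhiM_cast] at h3
  rw [← BrM_cast, ← single_cast, ← single_cast] at h3
  exact h3

lemma BrM_swap (a b : Fin 9 → ℝ) : BrM b a = -BrM a b := by
  ext r
  fin_cases r <;> simp [BrM] <;> ring

lemma brL_swap (a b : Fin 9 → ℝ) : brL b a = -brL a b := by
  simp [brL]

lemma brR_swap (a b : Fin 9 → ℝ) : brR b a = -brR a b := by
  simp only [brR, LinearMap.mk₂_apply]
  rw [BrM_swap, map_neg]

lemma br_single (k l : Fin 9) :
    brL (Pi.single k 1) (Pi.single l 1) = brR (Pi.single k 1) (Pi.single l 1) := by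
  rcases lt_trichotomy k l with h | rfl | h
  · exact br_single_lt k l h
  · have h : BrM (Pi.single k 1 : Fin 9 → ℝ) (Pi.single k 1) = 0 := by
      have := BrM_swap (Pi.single k 1) (Pi.single k 1)
      ext r
      have := congrFun this r
      simp only [Pi.neg_apply] at this
      simp only [Pi.zero_apply]
      linarith
    simp [brL, brR, h]
  · rw [brL_swap, brR_swap, br_single_lt l k h]

lemma Phi_br (a b : Fin 9 → ℝ) : Phi a * Phi b - Phi b * Phi a = Phi (BrM a b) := by
  have h : brL = brR := by
    refine LinearMap.ext_basis (Pi.basisFun ℝ (Fin 9)) (Pi.basisFun ℝ (Fin 9)) fun k l => ?_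
    simpa only [Pi.basisFun_apply] using br_single k l
  exact congrArg (fun F => F a b) h

set_option maxHeartbeats 2000000 in
lemma Gl_br (a b : Fin 9 → ℝ) : Gl (BrM a b) = Gl a * Gl b - Gl b * Gl a := by
  refine Prod.ext ?_ ?_
  · ext r c
    fin_cases r <;> fin_cases c <;>
      simp [Gl, G3, BrM] <;> ring
  · ext r c
    fin_cases r <;> fin_cases c <;>
      simp [Gl, G4, BrM] <;> ring

lemma Gl_inj (a b : Fin 9 → ℝ) (h : Gl a = Gl b) : a = b := by
  have h3 : G3 a = G3 b := congrArg Prod.fst h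
  have h4 : G4 a = G4 b := congrArg Prod.snd h
  have e01 := congrFun (congrFun h3 0) 1
  have e02 := congrFun (congrFun h3 0) 2
  have e12 := congrFun (congrFun h3 1) 2
  have f01 := congrFun (congrFun h4 0) 1
  have f02 := congrFun (congrFun h4 0) 2
  have f03 := congrFun (congrFun h4 0) 3
  have f12 := congrFun (congrFun h4 1) 2
  have f13 := congrFun (congrFun h4 1) 3
  have f23 := congrFun (congrFun h4 2) 3
  simp [G3, G4] at e01 e02 e12 f01 f02 f03 f12 f13 f23
  ext k
  fin_cases k <;> assumption

lemma Gl_range (p : Matrix (Fin 3) (Fin 3) ℝ × Matrix (Fin 4) (Fin 4) ℝ) :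
    (∃ a, Gl a = p) ↔ p.1ᵀ = -p.1 ∧ p.2ᵀ * eta4 + eta4 * p.2 = 0 := by
  constructor
  · rintro ⟨a, rfl⟩
    constructor
    · ext r c
      fin_cases r <;> fin_cases c <;> simp [Gl, G3]
    · ext r c
      fin_cases r <;> fin_cases c <;> simp [Gl, G4, eta4]
  · rintro ⟨h3, h4⟩
    obtain ⟨X, Y⟩ := p
    have H3 : ∀ i j, X j i = - X i j := fun i j => congrFun (congrFun h3 i) j
    have H4 : ∀ i j, Y j i * ![(-1 : ℝ), 1, 1, 1] j + ![(-1 : ℝ), 1, 1, 1] i * Y i j = 0 := by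
      intro i j
      have := congrFun (congrFun h4 i) j
      simpa [eta4] using this
    refine ⟨![X 0 1 / 2, X 0 2 / 2, X 1 2 / 2, -Y 0 1 / 2, -Y 0 2 / 2, -Y 0 3 / 2,
      -Y 1 2 / 2, -Y 1 3 / 2, -Y 2 3 / 2], ?_⟩
    refine Prod.ext ?_ ?_
    · ext i j
      have h1 := H3 i j
      have h2 := H3 j i
      fin_cases i <;> fin_cases j <;> simp [Gl, G3] at h1 h2 ⊢ <;> linarith
    · ext i j
      have h1 := H4 i j
      have h2 := H4 j i
      fin_cases i <;> fin_cases j <;> simp [Gl, G4] at h1 h2 ⊢ <;> linarith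

/-- the commutant of `J̃ = Ẽ⁴τ` in so(4,3) is the direct sum of the span
of `{Ẽ^iẼ^j : 1 ≤ i < j ≤ 3}` and the span of `{Ẽ^iẼ^j : 4 ≤ i < j ≤ 7}`; it is
9-dimensional and isomorphic, as a real Lie algebra, to so(3) ⊕ so(1,3). -/
theorem commutant_of_Jt_is_so3_so13 :
    commJtSub
      = Submodule.span ℝ {M | ∃ i j : Fin 7, i < j ∧ (j : ℕ) ≤ 2 ∧ M = Et i * Et j}
        ⊔ Submodule.span ℝ {M | ∃ i j : Fin 7, i < j ∧ 3 ≤ (i : ℕ) ∧ M = Et i * Et j} ∧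
    Module.finrank ℝ ↥commJtSub = 9 ∧
    (∀ A ∈ commJtSub, ∀ B ∈ commJtSub, A * B - B * A ∈ commJtSub) ∧
    ∃ f : Matrix (Fin 8) (Fin 8) ℝ →ₗ[ℝ]
        (Matrix (Fin 3) (Fin 3) ℝ × Matrix (Fin 4) (Fin 4) ℝ),
      Set.InjOn f commJtSub ∧
      f '' commJtSub = {p | p.1ᵀ = -p.1 ∧ p.2ᵀ * eta4 + eta4 * p.2 = 0} ∧
      ∀ A ∈ commJtSub, ∀ B ∈ commJtSub,
        f (A * B - B * A) = f A * f B - f B * f A := by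
  refine ⟨comm_eq, ?_, ?_, Gl ∘ₗ Co, ?_, ?_, ?_⟩
  · rw [range_Phi, LinearMap.finrank_range_of_inj (Function.LeftInverse.injective Co_Phi)]
    simp
  · rw [range_Phi]
    rintro _ ⟨a, rfl⟩ _ ⟨b, rfl⟩
    exact ⟨_, (Phi_br a b).symm⟩
  · rw [range_Phi]
    rintro _ ⟨a, rfl⟩ _ ⟨b, rfl⟩ h
    simp only [LinearMap.comp_apply, Co_Phi] at h
    rw [Gl_inj a b h]
  · rw [range_Phi]
    ext p
    rw [Set.mem_ofPred_eq, ← Gl_range]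
    constructor
    · rintro ⟨_, ⟨a, rfl⟩, rfl⟩
      exact ⟨a, by simp [Co_Phi]⟩
    · rintro ⟨a, rfl⟩
      exact ⟨_, ⟨a, rfl⟩, by simp [Co_Phi]⟩
  · rw [range_Phi]
    rintro _ ⟨a, rfl⟩ _ ⟨b, rfl⟩
    simp only [Phi_br, LinearMap.comp_apply, Co_Phi]
    exact Gl_br a b
end
end

section
/- On 𝕆⊗𝕆̃ with the two commuting complex structures J = E⁴⊗I and J̃ = -I⊗Ẽ¹Ẽ²Ẽ³, the three operators E⁴⊗Ẽ^i (i = 1,2,3) commute with both J and J̃, and together with ½ε^{ijk}I⊗Ẽ^jẼ^k they span a Lie algebra isomorphic to so(4) ≅ su(2) ⊕ su(2), with the two su(2) factors spanned by (½ε^{ijk}I⊗Ẽ^jẼ^k) ∓ E⁴⊗Ẽ^i respectively. -/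
open Matrix BigOperators

noncomputable section

def octIdx : Fin 8 → Fin 8 → Fin 8 :=
  ![![0, 1, 2, 3, 4, 5, 6, 7],
    ![1, 0, 7, 6, 5, 4, 3, 2],
    ![2, 7, 0, 5, 6, 3, 4, 1],
    ![3, 6, 5, 0, 7, 2, 1, 4],
    ![4, 5, 6, 7, 0, 1, 2, 3],
    ![5, 4, 3, 2, 1, 0, 7, 6],
    ![6, 3, 4, 1, 2, 7, 0, 5],
    ![7, 2, 1, 4, 3, 6, 5, 0]]

def octSgn : Fin 8 → Fin 8 → ℝ :=
  ![![1, 1, 1, 1, 1, 1, 1, 1],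
    ![1, -1, -1, 1, -1, 1, -1, 1],
    ![1, 1, -1, -1, -1, 1, 1, -1],
    ![1, -1, 1, -1, -1, -1, 1, 1],
    ![1, 1, 1, 1, -1, -1, -1, -1],
    ![1, -1, -1, 1, 1, -1, 1, -1],
    ![1, 1, -1, -1, 1, -1, -1, 1],
    ![1, -1, 1, -1, 1, 1, -1, -1]]

/-- Left multiplication by the octonion `x` as an 8×8 real matrix. -/
def Lo (x : Fin 8 → ℝ) : Matrix (Fin 8) (Fin 8) ℝ :=
  Matrix.of fun r c => ∑ i, if r = octIdx i c then octSgn i c * x i else 0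

/-- The imaginary unit octonion `e^(i+1)` as a vector. -/
def eo (i : Fin 7) : Fin 8 → ℝ := Pi.single i.succ 1

/-- The Clifford generator `E^(i+1) = L_{e^(i+1)}`. -/
def Eo (i : Fin 7) : Matrix (Fin 8) (Fin 8) ℝ := Lo (eo i)

/-- Matrix model of `𝕆 ⊗ 𝕆̃`: an operator `A⊗B` acts on an 8×8 matrix `Ψ` by `AΨBᵀ`. -/
abbrev EndOT := Matrix (Fin 8) (Fin 8) ℝ →ₗ[ℝ] Matrix (Fin 8) (Fin 8) ℝ

/-- `J = E⁴ ⊗ I`. -/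
def opJ : EndOT := LinearMap.mulLeft ℝ (Eo 3)

/-- `J̃ = -I ⊗ Ẽ¹Ẽ²Ẽ³`. -/
def opJt : EndOT := -(LinearMap.mulRight ℝ (Et 0 * Et 1 * Et 2)ᵀ)

/-- `T i = E⁴ ⊗ Ẽ^i`, `i = 1,2,3`. -/
def opT : Fin 3 → EndOT :=
  ![LinearMap.mulLeft ℝ (Eo 3) ∘ₗ LinearMap.mulRight ℝ (Et 0)ᵀ,
    LinearMap.mulLeft ℝ (Eo 3) ∘ₗ LinearMap.mulRight ℝ (Et 1)ᵀ,
    LinearMap.mulLeft ℝ (Eo 3) ∘ₗ LinearMap.mulRight ℝ (Et 2)ᵀ]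

/-- `S i = ½ε^{ijk} I ⊗ Ẽ^jẼ^k`, `i = 1,2,3`. -/
def opS : Fin 3 → EndOT :=
  ![LinearMap.mulRight ℝ (Et 1 * Et 2)ᵀ,
    LinearMap.mulRight ℝ (Et 2 * Et 0)ᵀ,
    LinearMap.mulRight ℝ (Et 0 * Et 1)ᵀ]

/-- The span of the `T i` and `S i`. -/
def so4Span : Submodule ℝ EndOT :=
  Submodule.span ℝ ({g | ∃ i : Fin 3, g = opT i ∨ g = opS i} : Set EndOT)

/-- The spans of `S i - T i` and of `S i + T i`. -/
def suLSpan : Submodule ℝ EndOT := Submodule.span ℝ {g | ∃ i : Fin 3, g = opS i - opT i}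
def suRSpan : Submodule ℝ EndOT := Submodule.span ℝ {g | ∃ i : Fin 3, g = opS i + opT i}

def sgnZ : Fin 3 → Fin 8 → ℤ :=
  ![![1, 1, 1, -1, 1, 1, -1, 1],
    ![1, -1, 1, 1, 1, 1, 1, -1],
    ![1, 1, -1, 1, 1, -1, 1, 1]]

/-- Integer version of `Et i`, `i < 3`. -/
def EtZ (i : Fin 3) : Matrix (Fin 8) (Fin 8) ℤ :=
  Matrix.of fun r c => if r = sIdx (i.castLE (by decide)).succ c then sgnZ i c else 0

lemma Et_eq (i : Fin 3) : Et (i.castLE (by decide)) = (EtZ i).map (Int.castRingHom ℝ) := by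
  have key : ∀ c, sSgn ((i.castLE (by decide : 3 ≤ 7)).succ) c = (sgnZ i c : ℝ) := by
    intro c
    fin_cases i <;> fin_cases c <;> simp [sSgn, sgnZ, Fin.succ]
  ext r c
  simp only [Et, Lt, et, Matrix.of_apply, EtZ, Matrix.map_apply]
  rw [Finset.sum_eq_single ((i.castLE (by decide : 3 ≤ 7)).succ)]
  · simp only [Pi.single_eq_same, mul_one, key]
    split_ifs <;> simp
  · intro b _ hb
    simp [Pi.single_eq_of_ne hb]
  · simp

lemma EtZ_sq (i : Fin 3) : EtZ i * EtZ i = 1 := by revert i; decide +kernel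
lemma EtZ_anti (i j : Fin 3) (h : i ≠ j) : EtZ i * EtZ j = - (EtZ j * EtZ i) := by
  revert i j; decide +kernel

lemma Et_sq (i : Fin 3) : Et (i.castLE (by decide)) * Et (i.castLE (by decide)) = 1 := by
  rw [Et_eq, ← Matrix.map_mul, EtZ_sq]; simp
lemma Et_anti (i j : Fin 3) (h : i ≠ j) : Et (i.castLE (by decide)) * Et (j.castLE (by decide))
    = - (Et (j.castLE (by decide)) * Et (i.castLE (by decide))) := by
  rw [Et_eq, Et_eq, ← Matrix.map_mul, EtZ_anti i j h, ← Matrix.map_mul]; ext; simp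

lemma Eo3_apply (r c : Fin 8) :
    Eo 3 r c = if r = octIdx 4 c then octSgn 4 c else 0 := by
  simp only [Eo, Lo, eo, Matrix.of_apply]
  rw [Finset.sum_eq_single 4]
  · have : (Fin.succ 3 : Fin 8) = 4 := rfl
    simp [this]
  · intro b _ hb
    rw [Pi.single_eq_of_ne (by exact hb)]; simp
  · simp

lemma Eo3_sq : Eo 3 * Eo 3 = -1 := by
  ext r c
  rw [Matrix.mul_apply, Finset.sum_eq_single (octIdx 4 c)]
  · rw [Eo3_apply, Eo3_apply]
    fin_cases c <;> fin_cases r <;> simp [octIdx, octSgn]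
  · intro b _ hb
    rw [Eo3_apply b c, if_neg hb, mul_zero]
  · simp

/-- General element of the span. -/
def el (s t : Fin 3 → ℝ) : EndOT :=
  s 0 • opS 0 + s 1 • opS 1 + s 2 • opS 2 + (t 0 • opT 0 + t 1 • opT 1 + t 2 • opT 2)

/-- right factor -/
def rt (a : Matrix (Fin 8) (Fin 8) ℝ) : EndOT := LinearMap.mulRight ℝ aᵀ
/-- left factor -/
def jj : EndOT := LinearMap.mulLeft ℝ (Eo 3)

lemma rt_mul (a b : Matrix (Fin 8) (Fin 8) ℝ) : rt (a * b) = rt a * rt b := by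
  ext1 x; simp [rt, Matrix.mul_assoc]
lemma rt_neg (a : Matrix (Fin 8) (Fin 8) ℝ) : rt (-a) = - rt a := by
  ext1 x; simp [rt]
lemma rt_one : rt 1 = 1 := by
  ext1 x; simp [rt]
lemma jj_sq : jj * jj = -1 := by
  ext1 x; simp [jj, ← Matrix.mul_assoc, Eo3_sq]
lemma jj_rt (a : Matrix (Fin 8) (Fin 8) ℝ) : rt a * jj = jj * rt a := by
  ext1 x; simp [jj, rt, Matrix.mul_assoc]

/-- generators -/
def gg (i : Fin 3) : EndOT := rt (Et (i.castLE (by decide)))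

lemma gg_sq (i : Fin 3) : gg i * gg i = 1 := by
  rw [gg, ← rt_mul, Et_sq, rt_one]
lemma gg_anti (i j : Fin 3) (h : i ≠ j) : gg i * gg j = -(gg j * gg i) := by
  rw [gg, gg, ← rt_mul, Et_anti i j h, rt_neg, rt_mul]
lemma gg_jj (i : Fin 3) : gg i * jj = jj * gg i := jj_rt _

lemma opT_eq (i : Fin 3) : opT i = jj * gg i := by fin_cases i <;> rfl
lemma opS0 : opS 0 = gg 1 * gg 2 := rt_mul _ _
lemma opS1 : opS 1 = gg 2 * gg 0 := rt_mul _ _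
lemma opS2 : opS 2 = gg 0 * gg 1 := rt_mul _ _
lemma opJ_eq : opJ = jj := rfl
lemma opJt_eq : opJt = -(gg 0 * gg 1 * gg 2) := by
  show -rt _ = _
  rw [rt_mul, rt_mul]; rfl

section abstractRing
variable {R : Type*} [Ring R] (j a b c : R)

/-- Rewriting package: all monomials are normalised to `j`, `a`, `b`, `c` order. -/
structure Cl : Prop where
  jj : j * j = -1
  aa : a * a = 1
  bb : b * b = 1
  cc : c * c = 1
  ba : b * a = -(a * b)
  ca : c * a = -(a * c)
  cb : c * b = -(b * c)
  aj : a * j = j * a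
  bj : b * j = j * b
  cj : c * j = j * c

variable {j a b c}
lemma ext_rel {x y z : R} (h : x * y = z) (w : R) : x * (y * w) = z * w := by
  rw [← mul_assoc, h]
end abstractRing

lemma cl : Cl jj (gg 0) (gg 1) (gg 2) where
  jj := jj_sq
  aa := gg_sq 0
  bb := gg_sq 1
  cc := gg_sq 2
  ba := gg_anti 1 0 (by decide)
  ca := gg_anti 2 0 (by decide)
  cb := gg_anti 2 1 (by decide)
  aj := gg_jj 0
  bj := gg_jj 1
  cj := gg_jj 2

lemma Cl.central {R : Type*} [Ring R] {j a b c : R} (h : Cl j a b c) :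
    (j * a) * -(a * b * c) = -(a * b * c) * (j * a) ∧
    (j * b) * -(a * b * c) = -(a * b * c) * (j * b) ∧
    (j * c) * -(a * b * c) = -(a * b * c) * (j * c) := by
  obtain ⟨h1, h2, h3, h4, h5, h6, h7, h8, h9, h10⟩ := h
  refine ⟨?_, ?_, ?_⟩ <;> simp only [mul_assoc, h1, h2, h3, h4, h5, h6, h7, h8, h9, h10, ext_rel h1, ext_rel h2,
    ext_rel h3, ext_rel h4, ext_rel h5, ext_rel h6, ext_rel h7, ext_rel h8, ext_rel h9,
    ext_rel h10, mul_neg, neg_mul, one_mul, mul_one, neg_neg]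

lemma Cl.comm {R : Type*} [Ring R] [Algebra ℝ R] {j a b c : R} (h : Cl j a b c)
    (s t s' t' : Fin 3 → ℝ) :
    ((s 0) • (b * c) + (s 1) • (c * a) + (s 2) • (a * b) +
      ((t 0) • (j * a) + (t 1) • (j * b) + (t 2) • (j * c))) *
    ((s' 0) • (b * c) + (s' 1) • (c * a) + (s' 2) • (a * b) +
      ((t' 0) • (j * a) + (t' 1) • (j * b) + (t' 2) • (j * c))) -
    ((s' 0) • (b * c) + (s' 1) • (c * a) + (s' 2) • (a * b) +
      ((t' 0) • (j * a) + (t' 1) • (j * b) + (t' 2) • (j * c))) *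
    ((s 0) • (b * c) + (s 1) • (c * a) + (s 2) • (a * b) +
      ((t 0) • (j * a) + (t 1) • (j * b) + (t 2) • (j * c))) =
    (-2 * (s 1 * s' 2 - s 2 * s' 1 + (t 1 * t' 2 - t 2 * t' 1))) • (b * c) + (-2 * (s 2 * s' 0 - s 0 * s' 2 + (t 2 * t' 0 - t 0 * t' 2))) • (c * a) + (-2 * (s 0 * s' 1 - s 1 * s' 0 + (t 0 * t' 1 - t 1 * t' 0))) • (a * b) +
      ((-2 * (s 1 * t' 2 - s 2 * t' 1 + (t 1 * s' 2 - t 2 * s' 1))) • (j * a) + (-2 * (s 2 * t' 0 - s 0 * t' 2 + (t 2 * s' 0 - t 0 * s' 2))) • (j * b) + (-2 * (s 0 * t' 1 - s 1 * t' 0 + (t 0 * s' 1 - t 1 * s' 0))) • (j * c)) := by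
  obtain ⟨h1, h2, h3, h4, h5, h6, h7, h8, h9, h10⟩ := h
  simp only [mul_add, add_mul, smul_mul_assoc, mul_smul_comm, mul_assoc, h1, h2, h3, h4, h5, h6, h7, h8, h9, h10, ext_rel h1, ext_rel h2,
    ext_rel h3, ext_rel h4, ext_rel h5, ext_rel h6, ext_rel h7, ext_rel h8, ext_rel h9,
    ext_rel h10, mul_neg, neg_mul, one_mul, mul_one, neg_neg]
  module

lemma comm_J (i : Fin 3) : opT i * opJ = opJ * opT i ∧ opT i * opJt = opJt * opT i := by
  constructor
  · rw [opT_eq, opJ_eq, mul_assoc, gg_jj]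
  · rw [opT_eq, opJt_eq]
    obtain ⟨h1, h2, h3⟩ := Cl.central (R := Module.End ℝ (Matrix (Fin 8) (Fin 8) ℝ)) cl
    fin_cases i
    · exact h1
    · exact h2
    · exact h3

lemma el_comm (s t s' t' : Fin 3 → ℝ) : el s t * el s' t' - el s' t' * el s t =
    el ![-2 * (s 1 * s' 2 - s 2 * s' 1 + (t 1 * t' 2 - t 2 * t' 1)),
         -2 * (s 2 * s' 0 - s 0 * s' 2 + (t 2 * t' 0 - t 0 * t' 2)),
         -2 * (s 0 * s' 1 - s 1 * s' 0 + (t 0 * t' 1 - t 1 * t' 0))]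
       ![-2 * (s 1 * t' 2 - s 2 * t' 1 + (t 1 * s' 2 - t 2 * s' 1)),
         -2 * (s 2 * t' 0 - s 0 * t' 2 + (t 2 * s' 0 - t 0 * s' 2)),
         -2 * (s 0 * t' 1 - s 1 * t' 0 + (t 0 * s' 1 - t 1 * s' 0))] := by
  simp only [el, opT_eq, opS0, opS1, opS2]
  exact Cl.comm (R := Module.End ℝ (Matrix (Fin 8) (Fin 8) ℝ)) cl s t s' t'

lemma el_add (s t s' t' : Fin 3 → ℝ) : el s t + el s' t' = el (s + s') (t + t') := by
  simp only [el, Pi.add_apply]; module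
lemma el_smul (k : ℝ) (s t : Fin 3 → ℝ) : k • el s t = el (k • s) (k • t) := by
  simp only [el, Pi.smul_apply, smul_eq_mul]; module

lemma mem_so4 (A : EndOT) : A ∈ so4Span ↔ ∃ s t, A = el s t := by
  constructor
  · intro h
    induction h using Submodule.span_induction with
    | mem x hx =>
      obtain ⟨i, rfl | rfl⟩ := hx
      · refine ⟨0, Pi.single i 1, ?_⟩
        fin_cases i <;> simp [el, Pi.single_apply]
      · refine ⟨Pi.single i 1, 0, ?_⟩
        fin_cases i <;> simp [el, Pi.single_apply]
    | zero => exact ⟨0, 0, by simp [el]⟩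
    | add x y _ _ hx hy =>
      obtain ⟨s, t, rfl⟩ := hx
      obtain ⟨s', t', rfl⟩ := hy
      exact ⟨_, _, el_add _ _ _ _⟩
    | smul k x _ hx =>
      obtain ⟨s, t, rfl⟩ := hx
      exact ⟨_, _, el_smul _ _ _⟩
  · rintro ⟨s, t, rfl⟩
    have hS : ∀ i, opS i ∈ so4Span := fun i => Submodule.subset_span ⟨i, Or.inr rfl⟩
    have hT : ∀ i, opT i ∈ so4Span := fun i => Submodule.subset_span ⟨i, Or.inl rfl⟩
    unfold el
    refine add_mem (add_mem (add_mem ?_ ?_) ?_) (add_mem (add_mem ?_ ?_) ?_) <;>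
    first
    | exact Submodule.smul_mem _ _ (hS _)
    | exact Submodule.smul_mem _ _ (hT _)

lemma mem_suL (A : EndOT) : A ∈ suLSpan ↔ ∃ s, A = el s (-s) := by
  constructor
  · intro h
    induction h using Submodule.span_induction with
    | mem x hx =>
      obtain ⟨i, rfl⟩ := hx
      refine ⟨Pi.single i 1, ?_⟩
      fin_cases i <;> simp [el] <;> module
    | zero => exact ⟨0, by simp [el]⟩
    | add x y _ _ hx hy =>
      obtain ⟨s, rfl⟩ := hx
      obtain ⟨s', rfl⟩ := hy
      exact ⟨s + s', by rw [el_add, neg_add]⟩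
    | smul k x _ hx =>
      obtain ⟨s, rfl⟩ := hx
      exact ⟨k • s, by rw [el_smul, smul_neg]⟩
  · rintro ⟨s, rfl⟩
    have hS : ∀ i, opS i - opT i ∈ suLSpan := fun i => Submodule.subset_span ⟨i, rfl⟩
    have : el s (-s) = s 0 • (opS 0 - opT 0) + s 1 • (opS 1 - opT 1) + s 2 • (opS 2 - opT 2) := by
      simp only [el, Pi.neg_apply]; module
    rw [this]
    exact add_mem (add_mem (Submodule.smul_mem _ _ (hS _)) (Submodule.smul_mem _ _ (hS _)))
      (Submodule.smul_mem _ _ (hS _))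

lemma mem_suR (A : EndOT) : A ∈ suRSpan ↔ ∃ s, A = el s s := by
  constructor
  · intro h
    induction h using Submodule.span_induction with
    | mem x hx =>
      obtain ⟨i, rfl⟩ := hx
      refine ⟨Pi.single i 1, ?_⟩
      fin_cases i <;> simp [el, Pi.single_apply]
    | zero => exact ⟨0, by simp [el]⟩
    | add x y _ _ hx hy =>
      obtain ⟨s, rfl⟩ := hx
      obtain ⟨s', rfl⟩ := hy
      exact ⟨s + s', by rw [el_add]⟩
    | smul k x _ hx =>
      obtain ⟨s, rfl⟩ := hx
      exact ⟨k • s, by rw [el_smul]⟩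
  · rintro ⟨s, rfl⟩
    have hS : ∀ i, opS i + opT i ∈ suRSpan := fun i => Submodule.subset_span ⟨i, rfl⟩
    have : el s s = s 0 • (opS 0 + opT 0) + s 1 • (opS 1 + opT 1) + s 2 • (opS 2 + opT 2) := by
      simp only [el]; module
    rw [this]
    exact add_mem (add_mem (Submodule.smul_mem _ _ (hS _)) (Submodule.smul_mem _ _ (hS _)))
      (Submodule.smul_mem _ _ (hS _))

/-- Coordinate functional: the `(r, c)` entry of `X` applied to the unit `1 ⊗ 1`. -/
def co (r c : Fin 8) : EndOT →ₗ[ℝ] ℝ where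
  toFun X := X (Matrix.single 0 0 1) r c
  map_add' _ _ := rfl
  map_smul' _ _ := rfl

lemma rt_single (a : Matrix (Fin 8) (Fin 8) ℝ) (r c : Fin 8) :
    co r c (rt a) = if r = 0 then a c 0 else 0 := by
  show ((Matrix.single 0 0 1 : Matrix (Fin 8) (Fin 8) ℝ) * aᵀ) r c = _
  split_ifs with h
  · subst h; simp
  · rw [Matrix.single_mul_apply_of_ne]; exact h

lemma jrt_single (a : Matrix (Fin 8) (Fin 8) ℝ) (r c : Fin 8) :
    co r c (jj * rt a) = Eo 3 r 0 * a c 0 := by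
  show (Eo 3 * ((Matrix.single 0 0 1 : Matrix (Fin 8) (Fin 8) ℝ) * aᵀ)) r c = _
  rw [Matrix.mul_apply, Finset.sum_eq_single 0]
  · simp
  · intro b _ hb
    rw [Matrix.single_mul_apply_of_ne _ _ _ _ _ hb, mul_zero]
  · simp

lemma co_T (i : Fin 3) (r c : Fin 8) :
    co r c (opT i) = if r = 4 ∧ c = (i.castLE (by decide : 3 ≤ 7)).succ then 1 else 0 := by
  rw [opT_eq, gg, jrt_single, Eo3_apply, Et_eq]
  have h : EtZ i c 0 = if c = (i.castLE (by decide : 3 ≤ 7)).succ then 1 else 0 := by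
    revert i c; decide +kernel
  rw [Matrix.map_apply, h]
  have h4 : octIdx 4 0 = 4 := rfl
  have h4' : octSgn 4 0 = 1 := rfl
  rw [h4, h4']
  by_cases hr : r = 4 <;> by_cases hc : c = (i.castLE (by decide : 3 ≤ 7)).succ <;> simp [hr, hc]

/-- Integer version of the bivector attached to `i`. -/
def SZ (i : Fin 3) : Matrix (Fin 8) (Fin 8) ℤ := EtZ (i + 1) * EtZ (i + 2)

lemma opS_eq (i : Fin 3) : opS i = rt ((SZ i).map (Int.castRingHom ℝ)) := by
  rw [SZ, Matrix.map_mul, ← Et_eq, ← Et_eq]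
  fin_cases i <;> rfl

lemma co_S (i : Fin 3) (r c : Fin 8) :
    co r c (opS i) = if r = 0 ∧ c = i.natAdd 5 then 1 else 0 := by
  rw [opS_eq, rt_single]
  have h : SZ i c 0 = if c = i.natAdd 5 then 1 else 0 := by
    revert i c; decide +kernel
  rw [Matrix.map_apply, h]
  by_cases hr : r = 0 <;> by_cases hc : c = i.natAdd 5 <;> simp [hr, hc]

lemma co_el_s (s t : Fin 3 → ℝ) (i : Fin 3) : co 0 (i.natAdd 5) (el s t) = s i := by
  simp only [el, map_add, map_smul, co_T, co_S]
  fin_cases i <;> simp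

lemma co_el_t (s t : Fin 3 → ℝ) (i : Fin 3) :
    co 4 ((i.castLE (by decide : 3 ≤ 7)).succ) (el s t) = t i := by
  simp only [el, map_add, map_smul, co_T, co_S]
  fin_cases i <;> simp

/-- The model map to `so(4)`. -/
def F4 (s t : Fin 3 → ℝ) : Matrix (Fin 4) (Fin 4) ℝ :=
  !![0, -2 * t 0, -2 * t 1, -2 * t 2;
     2 * t 0, 0, 2 * s 2, -2 * s 1;
     2 * t 1, -2 * s 2, 0, 2 * s 0;
     2 * t 2, 2 * s 1, -2 * s 0, 0]

/-- The model map to `su(2)`. -/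
def F2 (s : Fin 3 → ℝ) : Matrix (Fin 2) (Fin 2) ℂ :=
  !![⟨0, 2 * s 2⟩, ⟨2 * s 1, 2 * s 0⟩; ⟨-2 * s 1, 2 * s 0⟩, ⟨0, -2 * s 2⟩]

/-- `S`-coordinates -/
def cs : EndOT →ₗ[ℝ] (Fin 3 → ℝ) := LinearMap.pi fun i => co 0 (i.natAdd 5)
/-- `T`-coordinates -/
def ct : EndOT →ₗ[ℝ] (Fin 3 → ℝ) :=
  LinearMap.pi fun i => co 4 ((i.castLE (by decide : 3 ≤ 7)).succ)

lemma cs_el (s t : Fin 3 → ℝ) : cs (el s t) = s := funext fun i => co_el_s s t i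
lemma ct_el (s t : Fin 3 → ℝ) : ct (el s t) = t := funext fun i => co_el_t s t i

/-- The isomorphism onto `so(4)`, extended linearly. -/
def f4 : EndOT →ₗ[ℝ] Matrix (Fin 4) (Fin 4) ℝ where
  toFun X := F4 (cs X) (ct X)
  map_add' X Y := by
    ext i j; fin_cases i <;> fin_cases j <;> simp [F4] <;> ring
  map_smul' k X := by
    ext i j; fin_cases i <;> fin_cases j <;> simp [F4] <;> ring

/-- The isomorphism onto `su(2)`, extended linearly. -/
def f2 : EndOT →ₗ[ℝ] Matrix (Fin 2) (Fin 2) ℂ where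
  toFun X := F2 (cs X)
  map_add' X Y := by
    ext i j; fin_cases i <;> fin_cases j <;> apply Complex.ext <;> simp [F2] <;> ring
  map_smul' k X := by
    ext i j; fin_cases i <;> fin_cases j <;> apply Complex.ext <;> simp [F2] <;> ring

lemma f4_el (s t : Fin 3 → ℝ) : f4 (el s t) = F4 s t := by
  show F4 _ _ = _
  rw [cs_el, ct_el]
lemma f2_el (s t : Fin 3 → ℝ) : f2 (el s t) = F2 s := by
  show F2 _ = _
  rw [cs_el]

lemma F4_inj {s t s' t' : Fin 3 → ℝ} (h : F4 s t = F4 s' t') : s = s' ∧ t = t' := by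
  have e := fun i j => congrFun (congrFun h i) j
  have h1 := e 1 0
  have h2 := e 2 0
  have h3 := e 3 0
  have h4 := e 1 2
  have h5 := e 3 1
  have h6 := e 2 3
  simp [F4] at h1 h2 h3 h4 h5 h6
  constructor <;> funext i <;> fin_cases i <;> assumption

lemma F2_inj {s s' : Fin 3 → ℝ} (h : F2 s = F2 s') : s = s' := by
  have e := fun i j => congrFun (congrFun h i) j
  have h1 := e 0 0
  have h2 := e 0 1
  simp [F2] at h1 h2
  funext i
  fin_cases i
  · exact h2.2
  · exact h2.1
  · exact h1

lemma F4_skew (A : Matrix (Fin 4) (Fin 4) ℝ) : Aᵀ = -A ↔ ∃ s t, F4 s t = A := by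
  constructor
  · intro h
    have e : ∀ i j, A j i = - A i j := fun i j => congrFun (congrFun h i) j
    have d : ∀ i, A i i = 0 := fun i => by linarith [e i i]
    refine ⟨![A 2 3 / 2, A 3 1 / 2, A 1 2 / 2], ![A 1 0 / 2, A 2 0 / 2, A 3 0 / 2], ?_⟩
    ext i j
    fin_cases i <;> fin_cases j <;> simp [F4, d] <;>
      linarith [e 0 1, e 0 2, e 0 3, e 1 2, e 1 3, e 2 3]
  · rintro ⟨s, t, rfl⟩
    ext i j
    fin_cases i <;> fin_cases j <;> simp [F4]

lemma F2_skew (A : Matrix (Fin 2) (Fin 2) ℂ) : (Aᴴ = -A ∧ A.trace = 0) ↔ ∃ s, F2 s = A := by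
  constructor
  · rintro ⟨h, ht⟩
    have e : ∀ i j, star (A j i) = - A i j := fun i j => congrFun (congrFun h i) j
    have e00 := e 0 0
    have e01 := e 0 1
    have e11 := e 1 1
    rw [Matrix.trace_fin_two] at ht
    rw [Complex.ext_iff] at e00 e01 e11 ht
    simp at e00 e01 e11 ht
    refine ⟨![(A 0 1).im / 2, (A 0 1).re / 2, (A 0 0).im / 2], ?_⟩
    ext i j
    fin_cases i <;> fin_cases j <;> apply Complex.ext <;> simp [F2] <;> linarith
  · rintro ⟨s, rfl⟩
    constructor
    · ext i j
      fin_cases i <;> fin_cases j <;> apply Complex.ext <;> simp [F2]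
    · rw [Matrix.trace_fin_two]
      apply Complex.ext <;> simp [F2]

lemma f4_comm (s t s' t' : Fin 3 → ℝ) : f4 (el s t * el s' t' - el s' t' * el s t) =
    F4 s t * F4 s' t' - F4 s' t' * F4 s t := by
  rw [el_comm, f4_el]
  ext i j
  fin_cases i <;> fin_cases j <;> simp [F4, Matrix.mul_apply, Fin.sum_univ_four] <;> ring

lemma f2_comm (k : ℝ) (hk : k * k = 1) (s s' : Fin 3 → ℝ) :
    f2 (el s (k • s) * el s' (k • s') - el s' (k • s') * el s (k • s)) =
    F2 s * F2 s' - F2 s' * F2 s := by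
  rw [el_comm, f2_el]
  ext i j
  fin_cases i <;> fin_cases j <;> apply Complex.ext <;>
    simp [F2, Matrix.mul_apply, Fin.sum_univ_two] <;> grind

/-- the operators `E⁴⊗Ẽ^i` commute with both complex structures `J`, `J̃`;
together with `½ε^{ijk}I⊗Ẽ^jẼ^k` they span a Lie algebra isomorphic to
so(4) ≅ su(2) ⊕ su(2), with the two su(2) factors spanned by `S_i ∓ T_i`. -/
theorem so4_from_two_complex_structures :
    (∀ i : Fin 3, opT i * opJ = opJ * opT i ∧ opT i * opJt = opJt * opT i) ∧
    (∀ A ∈ so4Span, ∀ B ∈ so4Span, A * B - B * A ∈ so4Span) ∧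
    (∃ f : EndOT →ₗ[ℝ] Matrix (Fin 4) (Fin 4) ℝ,
      Set.InjOn f so4Span ∧ f '' so4Span = {A | Aᵀ = -A} ∧
      ∀ A ∈ so4Span, ∀ B ∈ so4Span, f (A * B - B * A) = f A * f B - f B * f A) ∧
    so4Span = suLSpan ⊔ suRSpan ∧
    (∀ A ∈ suLSpan, ∀ B ∈ suRSpan, A * B = B * A) ∧
    (∀ A ∈ suLSpan, ∀ B ∈ suLSpan, A * B - B * A ∈ suLSpan) ∧
    (∀ A ∈ suRSpan, ∀ B ∈ suRSpan, A * B - B * A ∈ suRSpan) ∧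
    (∃ fL : EndOT →ₗ[ℝ] Matrix (Fin 2) (Fin 2) ℂ,
      Set.InjOn fL suLSpan ∧ fL '' suLSpan = {A | Aᴴ = -A ∧ A.trace = 0} ∧
      ∀ A ∈ suLSpan, ∀ B ∈ suLSpan, fL (A * B - B * A) = fL A * fL B - fL B * fL A) ∧
    (∃ fR : EndOT →ₗ[ℝ] Matrix (Fin 2) (Fin 2) ℂ,
      Set.InjOn fR suRSpan ∧ fR '' suRSpan = {A | Aᴴ = -A ∧ A.trace = 0} ∧
      ∀ A ∈ suRSpan, ∀ B ∈ suRSpan, fR (A * B - B * A) = fR A * fR B - fR B * fR A) := by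
  have hneg : ∀ s : Fin 3 → ℝ, -s = (-1 : ℝ) • s := fun s => by simp
  have hone : ∀ s : Fin 3 → ℝ, el s s = el s ((1 : ℝ) • s) := fun s => by simp
  refine ⟨comm_J, ?_, ⟨f4, ?_, ?_, ?_⟩, ?_, ?_, ?_, ?_, ⟨f2, ?_, ?_, ?_⟩, ⟨f2, ?_, ?_, ?_⟩⟩
  · intro A hA B hB
    rw [mem_so4] at *
    obtain ⟨s, t, rfl⟩ := hA
    obtain ⟨s', t', rfl⟩ := hB
    exact ⟨_, _, el_comm _ _ _ _⟩
  · intro A hA B hB h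
    rw [SetLike.mem_coe, mem_so4] at hA hB
    obtain ⟨s, t, rfl⟩ := hA
    obtain ⟨s', t', rfl⟩ := hB
    rw [f4_el, f4_el] at h
    obtain ⟨rfl, rfl⟩ := F4_inj h
    rfl
  · ext A
    rw [Set.mem_ofPred_eq, F4_skew]
    constructor
    · rintro ⟨X, hX, rfl⟩
      rw [SetLike.mem_coe, mem_so4] at hX
      obtain ⟨s, t, rfl⟩ := hX
      exact ⟨s, t, (f4_el s t).symm⟩
    · rintro ⟨s, t, rfl⟩
      exact ⟨el s t, (mem_so4 _).2 ⟨s, t, rfl⟩, f4_el s t⟩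
  · intro A hA B hB
    rw [mem_so4] at hA hB
    obtain ⟨s, t, rfl⟩ := hA
    obtain ⟨s', t', rfl⟩ := hB
    rw [f4_comm, f4_el, f4_el]
  · ext A
    rw [Submodule.mem_sup, mem_so4]
    constructor
    · rintro ⟨s, t, rfl⟩
      refine ⟨_, (mem_suL _).2 ⟨(1 / 2 : ℝ) • (s - t), rfl⟩, _,
        (mem_suR _).2 ⟨(1 / 2 : ℝ) • (s + t), rfl⟩, ?_⟩
      rw [el_add]
      congr 1 <;> module
    · rintro ⟨X, hX, Y, hY, rfl⟩
      obtain ⟨s, rfl⟩ := (mem_suL _).1 hX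
      obtain ⟨t, rfl⟩ := (mem_suR _).1 hY
      exact ⟨_, _, el_add _ _ _ _⟩
  · intro A hA B hB
    obtain ⟨s, rfl⟩ := (mem_suL _).1 hA
    obtain ⟨t, rfl⟩ := (mem_suR _).1 hB
    rw [← sub_eq_zero, el_comm]
    simp only [el, Pi.neg_apply, Matrix.cons_val]
    module
  · intro A hA B hB
    obtain ⟨s, rfl⟩ := (mem_suL _).1 hA
    obtain ⟨t, rfl⟩ := (mem_suL _).1 hB
    rw [mem_suL, el_comm]
    refine ⟨_, congrArg _ ?_⟩
    funext i
    fin_cases i <;> simp <;> ring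
  · intro A hA B hB
    obtain ⟨s, rfl⟩ := (mem_suR _).1 hA
    obtain ⟨t, rfl⟩ := (mem_suR _).1 hB
    rw [mem_suR, el_comm]
    exact ⟨_, rfl⟩
  · intro A hA B hB h
    obtain ⟨s, rfl⟩ := (mem_suL _).1 hA
    obtain ⟨t, rfl⟩ := (mem_suL _).1 hB
    rw [f2_el, f2_el] at h
    rw [F2_inj h]
  · ext A
    rw [Set.mem_ofPred_eq, F2_skew]
    constructor
    · rintro ⟨X, hX, rfl⟩
      obtain ⟨s, rfl⟩ := (mem_suL _).1 hX
      exact ⟨s, (f2_el s _).symm⟩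
    · rintro ⟨s, rfl⟩
      exact ⟨_, (mem_suL _).2 ⟨s, rfl⟩, f2_el s _⟩
  · intro A hA B hB
    obtain ⟨s, rfl⟩ := (mem_suL _).1 hA
    obtain ⟨t, rfl⟩ := (mem_suL _).1 hB
    rw [hneg s, hneg t, f2_comm (-1) (by norm_num), f2_el, f2_el]
  · intro A hA B hB h
    obtain ⟨s, rfl⟩ := (mem_suR _).1 hA
    obtain ⟨t, rfl⟩ := (mem_suR _).1 hB
    rw [f2_el, f2_el] at h
    rw [F2_inj h]
  · ext A
    rw [Set.mem_ofPred_eq, F2_skew]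
    constructor
    · rintro ⟨X, hX, rfl⟩
      obtain ⟨s, rfl⟩ := (mem_suR _).1 hX
      exact ⟨s, (f2_el s _).symm⟩
    · rintro ⟨s, rfl⟩
      exact ⟨_, (mem_suR _).2 ⟨s, rfl⟩, f2_el s _⟩
  · intro A hA B hB
    obtain ⟨s, rfl⟩ := (mem_suR _).1 hA
    obtain ⟨t, rfl⟩ := (mem_suR _).1 hB
    rw [hone s, hone t, f2_comm 1 (by norm_num), f2_el, f2_el]
end
end
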